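/- arXiv:1803.06586 — 7 statements merged into one kernel-verified Lean document; each statement's English description precedes it below -/
import Mathlib

section
/- Let d, t ≥ 1, let Φ be a real t × d matrix, y ∈ ℝ^t, v ∈ ℝ^d, and β, σ₀ > 0. Define K = Φ·Φᵀ ∈ ℝ^{t×t}, κ = Φ·v ∈ ℝ^t, Σ_o = ( (1/(2σ₀²β))·I_t + K )⁻¹, Σ̂ = (2β·ΦᵀΦ + (1/σ₀²)·I_d)⁻¹, and μ̂ = 2β·Σ̂·Φᵀ·y. Then vᵀ·μ̂ = 2σ₀²β · κᵀ·(I_t − Σ_o·K)·y. -/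
open Matrix

/-- Kernelized posterior mean: the posterior mean of the prediction `⟨w, v⟩` under the
Gaussian posterior `N(μ̂, Σ̂)` can be written purely in terms of inner products, as
`vᵀ μ̂ = 2σ₀²β · κᵀ (I_t − Σ_o K) y` where `K = ΦΦᵀ`, `κ = Φv`, and
`Σ_o = ((2σ₀²β)⁻¹ I_t + K)⁻¹`. -/
theorem stmt_7 (d t : ℕ) (hd : 1 ≤ d) (ht : 1 ≤ t)
    (Φ : Matrix (Fin t) (Fin d) ℝ) (y : Fin t → ℝ) (v : Fin d → ℝ)
    (β σ₀ : ℝ) (hβ : 0 < β) (hσ : 0 < σ₀)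
    (K : Matrix (Fin t) (Fin t) ℝ) (hK : K = Φ * Φᵀ)
    (κ : Fin t → ℝ) (hκ : κ = Φ.mulVec v)
    (So : Matrix (Fin t) (Fin t) ℝ)
    (hSo : So = ((1 / (2 * σ₀ ^ 2 * β)) • (1 : Matrix (Fin t) (Fin t) ℝ) + K)⁻¹)
    (Sigmahat : Matrix (Fin d) (Fin d) ℝ)
    (hSigmahat : Sigmahat =
      ((2 * β) • (Φᵀ * Φ) + (1 / σ₀ ^ 2) • (1 : Matrix (Fin d) (Fin d) ℝ))⁻¹)
    (muhat : Fin d → ℝ) (hmuhat : muhat = (2 * β) • Sigmahat.mulVec (Φᵀ.mulVec y)) :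
    v ⬝ᵥ muhat = 2 * σ₀ ^ 2 * β * (κ ⬝ᵥ ((1 - So * K).mulVec y)) := by
  have hc : 0 < 1 / (2 * σ₀ ^ 2 * β) := by positivity
  have hc' : 2 * σ₀ ^ 2 * β * (1 / (2 * σ₀ ^ 2 * β)) = 1 := by field_simp
  have hbc : 2 * β * (1 / (2 * σ₀ ^ 2 * β)) = 1 / σ₀ ^ 2 := by field_simp
  have hs : 0 < 1 / σ₀ ^ 2 := by positivity
  have hb : 0 < 2 * β := by positivity
  generalize 1 / (2 * σ₀ ^ 2 * β) = c at *
  generalize 1 / σ₀ ^ 2 = s at *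
  have hM : (c • (1 : Matrix (Fin t) (Fin t) ℝ) + K).PosDef := by
    refine (PosDef.one.smul hc).add_posSemidef ?_
    rw [hK]
    simpa using posSemidef_self_mul_conjTranspose Φ
  have hA : ((2 * β) • (Φᵀ * Φ) + s • (1 : Matrix (Fin d) (Fin d) ℝ)).PosDef := by
    refine PosDef.posSemidef_add ?_ (PosDef.one.smul hs)
    have h : (Φᵀ * Φ).PosSemidef := by
      simpa using posSemidef_conjTranspose_mul_self Φ
    exact h.smul hb.le
  have hAΦ : ((2 * β) • (Φᵀ * Φ) + s • (1 : Matrix (Fin d) (Fin d) ℝ)) * Φᵀ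
      = (2 * β) • (Φᵀ * (c • (1 : Matrix (Fin t) (Fin t) ℝ) + K)) := by
    rw [hK, ← hbc]
    simp [Matrix.add_mul, Matrix.mul_add, smul_add, smul_smul, Matrix.mul_assoc, add_comm]
  have hMS : (c • (1 : Matrix (Fin t) (Fin t) ℝ) + K) * So = 1 := by
    rw [hSo]; exact Matrix.mul_nonsing_inv _ ((isUnit_iff_isUnit_det _).1 hM.isUnit)
  have hSM : So * (c • (1 : Matrix (Fin t) (Fin t) ℝ) + K) = 1 := by
    rw [hSo]; exact Matrix.nonsing_inv_mul _ ((isUnit_iff_isUnit_det _).1 hM.isUnit)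
  have hSA : Sigmahat * ((2 * β) • (Φᵀ * Φ) + s • (1 : Matrix (Fin d) (Fin d) ℝ)) = 1 := by
    rw [hSigmahat]; exact Matrix.nonsing_inv_mul _ ((isUnit_iff_isUnit_det _).1 hA.isUnit)
  have key : (2 * β) • (Sigmahat * Φᵀ) = Φᵀ * So := by
    have h1 : Sigmahat * (((2 * β) • (Φᵀ * Φ) + s • (1 : Matrix (Fin d) (Fin d) ℝ)) * Φᵀ) * So
        = Φᵀ * So := by
      rw [← Matrix.mul_assoc, hSA, Matrix.one_mul]
    rw [← h1, hAΦ, Matrix.mul_smul, Matrix.smul_mul, Matrix.mul_assoc, Matrix.mul_assoc, hMS,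
      Matrix.mul_one]
  have hK1 : 1 - So * K = c • So := by
    rw [← hSM, Matrix.mul_add]; simp
  rw [hK1, hmuhat, hκ, Matrix.mulVec_mulVec, ← Matrix.smul_mulVec, key, Matrix.smul_mulVec,
    dotProduct_smul, smul_eq_mul, ← mul_assoc, hc', one_mul, ← Matrix.mulVec_mulVec,
    Matrix.dotProduct_mulVec, Matrix.vecMul_transpose]
end

section
/- Let d, t ≥ 1, let Φ be a real t × d matrix, v ∈ ℝ^d, and β, σ₀ > 0. Define K = Φ·Φᵀ ∈ ℝ^{t×t}, κ = Φ·v ∈ ℝ^t, and Σ_o = ( (1/(2σ₀²β))·I_t + K )⁻¹. Then vᵀ·(2β·ΦᵀΦ + (1/σ₀²)·I_d)⁻¹·v = σ₀² · ( vᵀ·v − κᵀ·Σ_o·κ ). -/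
open Matrix

/-- Kernelized posterior variance: the posterior variance of the prediction `⟨w, v⟩`
under the Gaussian posterior with covariance `Σ̂ = (2β ΦᵀΦ + σ₀⁻² I_d)⁻¹` equals
`σ₀² (vᵀv − κᵀ Σ_o κ)` where `K = ΦΦᵀ`, `κ = Φv`, and `Σ_o = ((2σ₀²β)⁻¹ I_t + K)⁻¹`. -/
theorem stmt_8 (d t : ℕ) (hd : 1 ≤ d) (ht : 1 ≤ t)
    (Φ : Matrix (Fin t) (Fin d) ℝ) (v : Fin d → ℝ)
    (β σ₀ : ℝ) (hβ : 0 < β) (hσ : 0 < σ₀)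
    (K : Matrix (Fin t) (Fin t) ℝ) (hK : K = Φ * Φᵀ)
    (κ : Fin t → ℝ) (hκ : κ = Φ.mulVec v)
    (So : Matrix (Fin t) (Fin t) ℝ)
    (hSo : So = ((1 / (2 * σ₀ ^ 2 * β)) • (1 : Matrix (Fin t) (Fin t) ℝ) + K)⁻¹) :
    v ⬝ᵥ (((2 * β) • (Φᵀ * Φ) + (1 / σ₀ ^ 2) • (1 : Matrix (Fin d) (Fin d) ℝ))⁻¹.mulVec v) =
      σ₀ ^ 2 * (v ⬝ᵥ v - κ ⬝ᵥ So.mulVec κ) := by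
  subst hK hκ
  set c : ℝ := 1 / (2 * σ₀ ^ 2 * β) with hc
  have hcpos : 0 < c := by positivity
  have hpd : (c • (1 : Matrix (Fin t) (Fin t) ℝ) + Φ * Φᵀ).PosDef := by
    have h1 : (c • (1 : Matrix (Fin t) (Fin t) ℝ)).PosDef := Matrix.PosDef.one.smul hcpos
    have h2 : (Φ * Φᵀ).PosSemidef := by
      simpa using Matrix.posSemidef_self_mul_conjTranspose Φ
    exact h1.add_posSemidef h2
  have hmul : (c • (1 : Matrix (Fin t) (Fin t) ℝ) + Φ * Φᵀ) * So = 1 := by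
    rw [hSo]
    exact Matrix.mul_nonsing_inv _ ((Matrix.isUnit_iff_isUnit_det _).1 hpd.isUnit)
  have key : (Φᵀ * Φ + c • (1 : Matrix (Fin d) (Fin d) ℝ)) * (1 - Φᵀ * So * Φ)
      = c • (1 : Matrix (Fin d) (Fin d) ℝ) := by
    have h3 : Φᵀ * ((c • (1 : Matrix (Fin t) (Fin t) ℝ) + Φ * Φᵀ) * So) * Φ = Φᵀ * Φ := by
      rw [hmul, Matrix.mul_one]
    have h4 : (Φᵀ * Φ + c • (1 : Matrix (Fin d) (Fin d) ℝ)) * (Φᵀ * So * Φ) = Φᵀ * Φ := by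
      refine Eq.trans ?_ h3
      simp only [Matrix.add_mul, Matrix.mul_add, Matrix.smul_mul, Matrix.mul_smul,
        Matrix.one_mul, Matrix.mul_assoc]
      abel
    rw [Matrix.mul_sub, h4, Matrix.mul_one]
    abel
  have hinv : ((2 * β) • (Φᵀ * Φ) + (1 / σ₀ ^ 2) • (1 : Matrix (Fin d) (Fin d) ℝ))⁻¹
      = σ₀ ^ 2 • (1 - Φᵀ * So * Φ) := by
    apply Matrix.inv_eq_right_inv
    have h5 : (2 * β) • (Φᵀ * Φ) + (1 / σ₀ ^ 2) • (1 : Matrix (Fin d) (Fin d) ℝ)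
        = (2 * β) • (Φᵀ * Φ + c • (1 : Matrix (Fin d) (Fin d) ℝ)) := by
      rw [smul_add, smul_smul]
      congr 2
      rw [hc]
      field_simp
    rw [h5, Matrix.smul_mul, Matrix.mul_smul, key, smul_smul, smul_smul]
    have : 2 * β * (σ₀ ^ 2 * c) = 1 := by
      rw [hc]
      field_simp
    rw [← mul_assoc] at this
    simp [this]
  rw [hinv, Matrix.smul_mulVec, dotProduct_smul, smul_eq_mul, Matrix.sub_mulVec,
    Matrix.one_mulVec, dotProduct_sub, ← Matrix.mulVec_mulVec, ← Matrix.mulVec_mulVec,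
    Matrix.dotProduct_mulVec v Φᵀ, Matrix.vecMul_transpose]
end

section
/- Let G be a finite nonempty set, π a probability mass function on G with π(g*) > 0 for a fixed g* ∈ G, Y a finite set, and v : G → ℝ^d the prediction of each structure on a fixed atomic question. Let ℓ : ℝ^d × Y → ℝ be a loss function with 0 ≤ ℓ(z,y) ≤ B and |ℓ(z,y) − ℓ(z',y)| ≤ C·‖z − z'‖ for all relevant z, z', y, for constants B, C > 0. Let η be a probability mass function on Y, define L(z) = Σ_y η(y)·ℓ(z,y), and suppose there exists λ > 0 such that L(v(g)) − L(v(g*)) ≥ λ·‖v(g) − v(g*)‖² for all g ∈ G. Suppose the variance Σ_g π(g)·‖v(g) − Σ_{g'} π(g')·v(g')‖² is at least γ ≥ 0. For each y ∈ Y define π_y(g) = π(g)·exp(−β·ℓ(v(g), y)) / Z_y with Z_y = Σ_h π(h)·exp(−β·ℓ(v(h), y)). If 0 < β ≤ min(λ/(2C²), 1/B), then Σ_{y} η(y)·(1/π_y(g*)) ≤ (1 − β·γ·λ/2)·(1/π(g*)). -/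
theorem aux_var {G : Type*} [Fintype G] {d : ℕ} (π : G → ℝ) (hπsum : ∑ g, π g = 1)
    (v : G → EuclideanSpace ℝ (Fin d)) (c : EuclideanSpace ℝ (Fin d)) :
    ∑ g, π g * ‖v g - ∑ g', π g' • v g'‖ ^ 2 ≤ ∑ g, π g * ‖v g - c‖ ^ 2 := by
  set m := ∑ g', π g' • v g' with hm
  have h1 : ∀ g, π g * ‖v g - c‖ ^ 2 = π g * ‖v g - m‖ ^ 2
      + 2 * inner ℝ (π g • (v g - m)) (m - c) + π g * ‖m - c‖ ^ 2 := by
    intro g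
    have : v g - c = (v g - m) + (m - c) := by abel
    rw [this, norm_add_sq_real, real_inner_smul_left]
    ring
  have h2 : ∑ g, π g • (v g - m) = 0 := by
    simp only [smul_sub, Finset.sum_sub_distrib]
    rw [← Finset.sum_smul, hπsum, one_smul, ← hm, sub_self]
  have h3 : ∑ g, π g * ‖v g - c‖ ^ 2 = ∑ g, π g * ‖v g - m‖ ^ 2 + ‖m - c‖ ^ 2 := by
    simp only [h1, Finset.sum_add_distrib]
    rw [← Finset.mul_sum, ← sum_inner, h2, inner_zero_left, ← Finset.sum_mul, hπsum]
    ring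
  rw [h3]
  have := sq_nonneg ‖m - c‖
  linarith

/-- One-step drift bound for structural QBC under a general bounded Lipschitz loss
satisfying the quadratic-margin noise condition: if `0 < β ≤ min(λ/(2C²), 1/B)` and the
posterior variance of the prediction on the queried atom is at least `γ`, then the
expected reciprocal posterior mass of the target after the exponential-weight update is
at most `(1 - β·γ·λ/2)` times its previous value. -/
theorem stmt_9 {G Y : Type*} [Fintype G] [Nonempty G] [Fintype Y] (d : ℕ)
    (π : G → ℝ) (hπnn : ∀ g, 0 ≤ π g) (hπsum : ∑ g, π g = 1)
    (gs : G) (hgs : 0 < π gs)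
    (v : G → EuclideanSpace ℝ (Fin d))
    (ℓ : EuclideanSpace ℝ (Fin d) → Y → ℝ)
    (B C : ℝ) (hB : 0 < B) (hC : 0 < C)
    (hℓnn : ∀ g y, 0 ≤ ℓ (v g) y) (hℓB : ∀ g y, ℓ (v g) y ≤ B)
    (hlip : ∀ g g' y, |ℓ (v g) y - ℓ (v g') y| ≤ C * ‖v g - v g'‖)
    (η : Y → ℝ) (hηnn : ∀ y, 0 ≤ η y) (hηsum : ∑ y, η y = 1)
    (lam : ℝ) (hlam : 0 < lam)
    (hmargin : ∀ g, lam * ‖v g - v gs‖ ^ 2 ≤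
      (∑ y, η y * ℓ (v g) y) - (∑ y, η y * ℓ (v gs) y))
    (γ : ℝ) (hγnn : 0 ≤ γ)
    (hvar : γ ≤ ∑ g, π g * ‖v g - ∑ g', π g' • v g'‖ ^ 2)
    (β : ℝ) (hβ0 : 0 < β) (hβ : β ≤ min (lam / (2 * C ^ 2)) (1 / B))
    (π' : Y → G → ℝ)
    (hπ' : ∀ y g, π' y g =
      π g * Real.exp (-β * ℓ (v g) y) / (∑ h, π h * Real.exp (-β * ℓ (v h) y))) :
    ∑ y, η y * (1 / π' y gs) ≤ (1 - β * γ * lam / 2) * (1 / π gs) := by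
  have hb1 : β * (2 * C ^ 2) ≤ lam := by
    have := hβ.trans (min_le_left _ _)
    rwa [le_div_iff₀ (by positivity)] at this
  have hb2 : β * B ≤ 1 := by
    have := hβ.trans (min_le_right _ _)
    rwa [le_div_iff₀ hB] at this
  have hrec : ∀ y, 1 / π' y gs =
      (∑ h, π h * Real.exp (-β * (ℓ (v h) y - ℓ (v gs) y))) * (1 / π gs) := by
    intro y
    have he : ∀ h, π h * Real.exp (-β * (ℓ (v h) y - ℓ (v gs) y)) =
        π h * Real.exp (-β * ℓ (v h) y) / Real.exp (-β * ℓ (v gs) y) := by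
      intro h
      rw [mul_sub, Real.exp_sub, mul_div_assoc]
    simp only [he]
    rw [← Finset.sum_div, hπ', one_div_div, div_mul_div_comm, mul_one,
      mul_comm (π gs)]
  have hexp : ∀ h y, Real.exp (-β * (ℓ (v h) y - ℓ (v gs) y)) ≤
      1 - β * (ℓ (v h) y - ℓ (v gs) y) + β ^ 2 * (C ^ 2 * ‖v h - v gs‖ ^ 2) := by
    intro h y
    set D := ℓ (v h) y - ℓ (v gs) y with hD
    have hDB : |D| ≤ B := by
      rw [abs_le]
      constructor <;> linarith [hℓnn h y, hℓnn gs y, hℓB h y, hℓB gs y]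
    have hx : |-β * D| ≤ 1 := by
      rw [abs_mul, abs_neg, abs_of_pos hβ0]
      exact (mul_le_mul_of_nonneg_left hDB hβ0.le).trans hb2
    have h1 := (abs_le.1 (Real.abs_exp_sub_one_sub_id_le hx)).2
    have h2 : D ^ 2 ≤ C ^ 2 * ‖v h - v gs‖ ^ 2 := by
      rw [← mul_pow, ← sq_abs D]
      exact pow_le_pow_left₀ (abs_nonneg _) (hlip h gs y) 2
    have h3 := mul_le_mul_of_nonneg_left h2 (sq_nonneg β)
    nlinarith
  have hE : ∀ h, ∑ y, η y * Real.exp (-β * (ℓ (v h) y - ℓ (v gs) y)) ≤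
      1 - β * lam / 2 * ‖v h - v gs‖ ^ 2 := by
    intro h
    have h1 : ∑ y, η y * Real.exp (-β * (ℓ (v h) y - ℓ (v gs) y)) ≤
        ∑ y, (η y - β * (η y * ℓ (v h) y - η y * ℓ (v gs) y)
          + η y * (β ^ 2 * (C ^ 2 * ‖v h - v gs‖ ^ 2))) := by
      apply Finset.sum_le_sum
      intro y _
      have := mul_le_mul_of_nonneg_left (hexp h y) (hηnn y)
      linarith
    rw [Finset.sum_add_distrib, Finset.sum_sub_distrib, ← Finset.mul_sum,
      Finset.sum_sub_distrib, ← Finset.sum_mul, hηsum] at h1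
    have h2 := mul_le_mul_of_nonneg_left (hmargin h) hβ0.le
    have h3 := mul_le_mul_of_nonneg_right hb1
      (mul_nonneg hβ0.le (sq_nonneg ‖v h - v gs‖))
    linarith
  simp only [hrec, ← mul_assoc]
  rw [← Finset.sum_mul]
  apply mul_le_mul_of_nonneg_right _ (by positivity)
  have hswap : ∑ y, η y * ∑ h, π h * Real.exp (-β * (ℓ (v h) y - ℓ (v gs) y)) =
      ∑ h, π h * ∑ y, η y * Real.exp (-β * (ℓ (v h) y - ℓ (v gs) y)) := by
    simp only [Finset.mul_sum]
    rw [Finset.sum_comm]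
    exact Finset.sum_congr rfl fun _ _ => Finset.sum_congr rfl fun _ _ => by ring
  rw [hswap]
  have h4 : ∑ h, π h * ∑ y, η y * Real.exp (-β * (ℓ (v h) y - ℓ (v gs) y)) ≤
      ∑ h, (π h - β * lam / 2 * (π h * ‖v h - v gs‖ ^ 2)) := by
    apply Finset.sum_le_sum
    intro h _
    have := mul_le_mul_of_nonneg_left (hE h) (hπnn h)
    linarith
  rw [Finset.sum_sub_distrib, ← Finset.mul_sum, hπsum] at h4
  have h5 := mul_le_mul_of_nonneg_left (hvar.trans (aux_var π hπsum v (v gs)))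
    (by positivity : 0 ≤ β * lam / 2)
  linarith
end

section
/- Let (Ω, F, P) be a probability space with filtration (F_t)_{t≥0}, and let (X_t)_{t≥0} be an adapted process with 0 < X_t ≤ 1 almost surely and X_0 = x_0 a constant in (0,1]. Let 0 < β, λ ≤ 1 with β ≤ λ/2, let s_o, τ ∈ (0,1), and let δ ∈ (0,1). Suppose: (i) e^{−β}·X_{t−1} ≤ X_t ≤ e^{β}·X_{t−1} almost surely for all t ≥ 1; and (ii) for every t ≥ 1, almost surely on the event {X_s ≤ τ for all s < t}, E[1 − X_{t−1}/X_t | F_{t−1}] ≥ β·λ·s_o/2. Then for any integer T ≥ (4/(β·λ·s_o)) · max( ln(1/x_0), (8·e^{β}/(β·λ·s_o)) · ln(1/δ) ), with probability at least 1 − δ there exists t ≤ T with X_t > τ. -/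
open MeasureTheory Filter

/-- Convergence rate for structural QBC under 0-1 loss with Massart noise: if each update
changes the posterior mass of the target by a factor between `e^{-β}` and `e^{β}`, and
while the posterior mass has stayed at most `τ` the expected one-step drift
`E[1 − X_{t-1}/X_t | F_{t-1}]` is at least `β·λ·s_o/2`, then for any
`T ≥ (4/(βλs_o)) · max(ln(1/x_0), (8e^β/(βλs_o))·ln(1/δ))`, with probability at least
`1 − δ` the posterior mass exceeds `τ` by time `T`. -/
theorem stmt_14 {Ω : Type*} {mΩ : MeasurableSpace Ω} (P : Measure Ω) [IsProbabilityMeasure P]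
    (F : Filtration ℕ mΩ) (X : ℕ → Ω → ℝ) (hadp : Adapted F X)
    (hbound : ∀ t, ∀ᵐ ω ∂P, 0 < X t ω ∧ X t ω ≤ 1)
    (x0 : ℝ) (hx0 : x0 ∈ Set.Ioc (0 : ℝ) 1) (hX0 : ∀ ω, X 0 ω = x0)
    (β lam sₒ τ δ : ℝ)
    (hβ : 0 < β ∧ β ≤ 1) (hlam : 0 < lam ∧ lam ≤ 1) (hβlam : β ≤ lam / 2)
    (hsₒ : sₒ ∈ Set.Ioo (0 : ℝ) 1) (hτ : τ ∈ Set.Ioo (0 : ℝ) 1) (hδ : δ ∈ Set.Ioo (0 : ℝ) 1)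
    (hratio : ∀ t : ℕ, 1 ≤ t → ∀ᵐ ω ∂P,
      Real.exp (-β) * X (t - 1) ω ≤ X t ω ∧ X t ω ≤ Real.exp β * X (t - 1) ω)
    (hdrift : ∀ t : ℕ, 1 ≤ t → ∀ᵐ ω ∂P,
      (∀ s < t, X s ω ≤ τ) →
        β * lam * sₒ / 2 ≤ (P[fun ω' => 1 - X (t - 1) ω' / X t ω' | F (t - 1)]) ω)
    (T : ℕ)
    (hT : (4 / (β * lam * sₒ)) *
        max (Real.log (1 / x0)) ((8 * Real.exp β / (β * lam * sₒ)) * Real.log (1 / δ)) ≤ T) :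
    ENNReal.ofReal (1 - δ) ≤ P {ω | ∃ t ≤ T, τ < X t ω} := by
  obtain ⟨hx0p, hx01⟩ := hx0
  have hmeas : ∀ t, Measurable[F t] (X t) := fun t => hadp t
  have hmeas' : ∀ t, Measurable (X t) := fun t => (hmeas t).mono (F.le t) le_rfl
  set c : ℝ := β * lam * sₒ / 2 with hc
  have hbls : 0 < β * lam * sₒ := mul_pos (mul_pos hβ.1 hlam.1) hsₒ.1
  have hcpos : 0 < c := by positivity
  have hc2 : c ≤ 1 / 2 := by
    have h1 : β * lam ≤ 1 := mul_le_one₀ hβ.2 hlam.1.le hlam.2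
    have h2 : β * lam * sₒ ≤ 1 := mul_le_one₀ h1 hsₒ.1.le hsₒ.2.le
    rw [hc]; linarith
  let A : ℕ → Set Ω := fun t => {ω | ∀ s < t, X s ω ≤ τ}
  have hAmeas : ∀ t, MeasurableSet[F t] (A (t + 1)) := by
    intro t
    have : A (t + 1) = ⋂ s, ⋂ (_ : s < t + 1), {ω | X s ω ≤ τ} := by
      ext ω; simp [A]
    rw [this]
    refine MeasurableSet.iInter fun s => MeasurableSet.iInter fun hs => ?_
    exact F.mono (Nat.lt_succ_iff.mp hs) _ (measurableSet_le (hmeas s) measurable_const)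
  have hAm : ∀ t, MeasurableSet (A t) := by
    intro t
    cases t with
    | zero => simp [A]
    | succ t => exact F.le t _ (hAmeas t)
  have hlow : ∀ t : ℕ, ∀ᵐ ω ∂P, Real.exp (-β) ^ t * x0 ≤ X t ω := by
    intro t
    induction t with
    | zero => exact Eventually.of_forall fun ω => by simp [hX0]
    | succ t ih =>
      filter_upwards [ih, hratio (t + 1) (by omega)] with ω h1 h2
      have h3 := h2.1
      simp only [Nat.add_sub_cancel] at h3
      calc Real.exp (-β) ^ (t + 1) * x0 = Real.exp (-β) * (Real.exp (-β) ^ t * x0) := by ring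
        _ ≤ Real.exp (-β) * X t ω := by gcongr
        _ ≤ _ := h3
  have hint : ∀ t, Integrable (fun ω => (X t ω)⁻¹) P := by
    intro t
    refine Integrable.of_bound (hmeas' t).inv.aestronglyMeasurable
      ((Real.exp (-β) ^ t * x0)⁻¹) ?_
    filter_upwards [hlow t, hbound t] with ω h1 h2
    rw [Real.norm_of_nonneg (inv_nonneg.mpr h2.1.le)]
    exact inv_anti₀ (by positivity) h1
  have hnn : ∀ t, ∀ᵐ ω ∂P, 0 ≤ (X t ω)⁻¹ := fun t => by
    filter_upwards [hbound t] with ω h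
    exact inv_nonneg.mpr h.1.le
  have hstep : ∀ t, ∫ ω in A (t + 1), (X (t + 1) ω)⁻¹ ∂P
      ≤ (1 - c) * ∫ ω in A t, (X t ω)⁻¹ ∂P := by
    intro t
    let f : Ω → ℝ := (A (t + 1)).indicator fun ω => (X t ω)⁻¹
    let g : Ω → ℝ := fun ω => 1 - X t ω / X (t + 1) ω
    have hfm : StronglyMeasurable[F t] f :=
      ((hmeas t).inv.indicator (hAmeas t)).stronglyMeasurable
    have hfi : Integrable f P := (hint t).indicator (hAm _)
    have hgi : Integrable g P := by
      refine (integrable_const 1).sub ?_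
      refine Integrable.mono (hint (t + 1)) ((hmeas' t).div (hmeas' (t + 1))).aestronglyMeasurable ?_
      filter_upwards [hbound t, hbound (t + 1)] with ω h1 h2
      rw [Real.norm_of_nonneg (div_nonneg h1.1.le h2.1.le),
        Real.norm_of_nonneg (inv_nonneg.mpr h2.1.le), div_eq_mul_inv]
      exact mul_le_of_le_one_left (inv_nonneg.mpr h2.1.le) h1.2
    have hfg : f * g =ᵐ[P] fun ω => f ω - (A (t + 1)).indicator (fun ω => (X (t + 1) ω)⁻¹) ω := by
      filter_upwards [hbound t, hbound (t + 1)] with ω h1 h2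
      have := h1.1.ne'
      have := h2.1.ne'
      by_cases hω : ω ∈ A (t + 1)
      · simp only [Pi.mul_apply, f, g, Set.indicator_of_mem hω]
        field_simp
      · simp only [Pi.mul_apply, f, g, Set.indicator_of_notMem hω]
        simp
    have hi2 : Integrable ((A (t + 1)).indicator (fun ω => (X (t + 1) ω)⁻¹)) P :=
      (hint (t + 1)).indicator (hAm _)
    have hfgi : Integrable (f * g) P := (hfi.sub hi2).congr hfg.symm
    have hpull := condExp_mul_of_stronglyMeasurable_left (m := F t) hfm hfgi hgi
    have e1 : ∫ ω, (f * g) ω ∂P = ∫ ω, (f * P[g | F t]) ω ∂P := by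
      rw [← integral_condExp (F.le t)]
      exact integral_congr_ae hpull
    have e2 : ∫ ω, (f * g) ω ∂P = ∫ ω, f ω ∂P
        - ∫ ω in A (t + 1), (X (t + 1) ω)⁻¹ ∂P := by
      rw [integral_congr_ae hfg, integral_sub hfi hi2, integral_indicator (hAm _), integral_indicator (hAm _)]
    have e3 : c * ∫ ω, f ω ∂P ≤ ∫ ω, (f * P[g | F t]) ω ∂P := by
      rw [← integral_const_mul]
      refine integral_mono_ae (hfi.const_mul c) (integrable_condExp.congr hpull) ?_
      filter_upwards [hdrift (t + 1) (by omega), hnn t] with ω h1 h2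
      by_cases hω : ω ∈ A (t + 1)
      · have h3 : c ≤ (P[g | F t]) ω := h1 hω
        simp only [Pi.mul_apply, f, Set.indicator_of_mem hω]
        rw [mul_comm]
        exact mul_le_mul_of_nonneg_left h3 h2
      · simp [f, Set.indicator_of_notMem hω]
    have e4 : ∫ ω, f ω ∂P ≤ ∫ ω in A t, (X t ω)⁻¹ ∂P := by
      rw [integral_indicator (hAm _)]
      refine setIntegral_mono_set (hint t).integrableOn (ae_restrict_of_ae (hnn t)) ?_
      exact HasSubset.Subset.eventuallyLE fun ω hω s hs => hω s (by omega)
    have e5 := mul_le_mul_of_nonneg_left e4 (show 0 ≤ 1 - c by linarith)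
    linarith
  have hall : ∀ t : ℕ, ∫ ω in A t, (X t ω)⁻¹ ∂P ≤ (1 - c) ^ t * x0⁻¹ := by
    intro t
    induction t with
    | zero => simp [A, hX0]
    | succ t ih =>
      calc _ ≤ _ := hstep t
        _ ≤ (1 - c) * ((1 - c) ^ t * x0⁻¹) :=
          mul_le_mul_of_nonneg_left ih (by linarith)
        _ = _ := by ring
  have hPA : P.real (A T) ≤ ∫ ω in A T, (X T ω)⁻¹ ∂P := by
    have : P.real (A T) = ∫ ω in A T, (1 : ℝ) ∂P := by simp
    rw [this]
    refine integral_mono_ae (integrable_const _) (hint T).integrableOn (ae_restrict_of_ae ?_)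
    filter_upwards [hbound T] with ω h
    exact (one_le_inv₀ h.1).mpr h.2
  have hfin : (1 - c) ^ T * x0⁻¹ ≤ δ := by
    have hδp := hδ.1
    have hL : 0 < Real.log (1 / δ) := Real.log_pos (by rw [lt_div_iff₀ hδp]; linarith [hδ.2])
    have hbc : β * lam * sₒ = 2 * c := by rw [hc]; ring
    rw [hbc] at hT
    have hT1 : Real.log (1 / x0) ≤ c * T / 2 := by
      have h := (mul_le_mul_of_nonneg_left (le_max_left _ _)
        (show 0 ≤ 4 / (2 * c) by positivity)).trans hT
      rw [div_mul_eq_mul_div, div_le_iff₀ (by positivity)] at h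
      linarith
    have hT2 : Real.log (1 / δ) ≤ c * T / 2 := by
      have h := (mul_le_mul_of_nonneg_left (le_max_right _ _)
        (show 0 ≤ 4 / (2 * c) by positivity)).trans hT
      rw [div_mul_eq_mul_div, div_le_iff₀ (by positivity)] at h
      have h8 : 1 ≤ 8 * Real.exp β / (2 * c) := by
        rw [le_div_iff₀ (by positivity)]
        have := Real.add_one_le_exp β
        linarith [hβ.1]
      have := mul_le_mul_of_nonneg_right h8 hL.le
      linarith
    have h1 : (1 - c) ^ T ≤ Real.exp (-(c * T)) := by
      have : Real.exp (-(c * T)) = Real.exp (-c) ^ T := by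
        rw [← Real.exp_nat_mul]; ring_nf
      rw [this]
      exact pow_le_pow_left₀ (by linarith) (by linarith [Real.add_one_le_exp (-c)]) _
    have h2 : x0⁻¹ = Real.exp (Real.log (1 / x0)) := by
      rw [Real.exp_log (by positivity), one_div]
    have h3 : δ = Real.exp (-Real.log (1 / δ)) := by
      rw [one_div, Real.log_inv, neg_neg, Real.exp_log hδp]
    calc (1 - c) ^ T * x0⁻¹ ≤ Real.exp (-(c * T)) * Real.exp (Real.log (1 / x0)) := by
          rw [h2]; gcongr
      _ = Real.exp (-(c * T) + Real.log (1 / x0)) := (Real.exp_add _ _).symm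
      _ ≤ Real.exp (-Real.log (1 / δ)) := Real.exp_le_exp.mpr (by linarith)
      _ = δ := h3.symm
  have hcompl : 1 - δ ≤ P.real (A T)ᶜ := by
    rw [probReal_compl_eq_one_sub (hAm T)]
    linarith [hall T]
  have hsub : (A T)ᶜ ⊆ {ω | ∃ t ≤ T, τ < X t ω} := by
    intro ω hω
    simp only [A, Set.mem_compl_iff, Set.mem_setOf_eq, not_forall, not_le] at hω
    obtain ⟨s, hs, h⟩ := hω
    exact ⟨s, hs.le, h⟩
  calc ENNReal.ofReal (1 - δ) ≤ ENNReal.ofReal (P.real (A T)ᶜ) := ENNReal.ofReal_le_ofReal hcompl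
    _ = P (A T)ᶜ := ofReal_measureReal
    _ ≤ _ := measure_mono hsub
end

section
/- Fix p ≥ 1 and points x, y ∈ [0,1]^p. Let I be uniformly distributed on {1,…,p} and, independently, let V be uniformly distributed on [0,1]. Then the probability that the axis-parallel cut (I, V) separates x and y — i.e., that exactly one of x_I ≤ V and y_I ≤ V holds — equals ‖x − y‖₁ / p, where ‖x − y‖₁ = Σ_{i=1}^p |x_i − y_i|. -/
open MeasureTheory

/-- For fixed `x, y ∈ [0,1]^p`, a uniformly random axis-parallel cut `(I, V)` — with `I`
uniform on `{1,…,p}` and `V` uniform on `[0,1]`, independent — separates `x` and `y`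
(exactly one of `x_I ≤ V`, `y_I ≤ V` holds) with probability `‖x − y‖₁ / p`. -/
theorem stmt_17 (p : ℕ) (hp : 1 ≤ p) (x y : Fin p → ℝ)
    (hx : ∀ i, x i ∈ Set.Icc (0 : ℝ) 1) (hy : ∀ i, y i ∈ Set.Icc (0 : ℝ) 1) :
    (((p : ENNReal)⁻¹ • (Measure.count : Measure (Fin p))).prod
        ((volume : Measure ℝ).restrict (Set.Icc 0 1)))
      {iv : Fin p × ℝ | Xor' (x iv.1 ≤ iv.2) (y iv.1 ≤ iv.2)} =
      ENNReal.ofReal ((∑ i, |x i - y i|) / p) := by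
  have hsec : ∀ i : Fin p, Prod.mk i ⁻¹' {iv : Fin p × ℝ | Xor' (x iv.1 ≤ iv.2) (y iv.1 ≤ iv.2)}
      = Set.Ico (min (x i) (y i)) (max (x i) (y i)) := by
    intro i
    ext v
    simp only [Set.mem_preimage, Set.mem_setOf_eq, Set.mem_Ico, Xor', min_le_iff, lt_max_iff,
      not_le]
    constructor
    · rintro (⟨h1, h2⟩ | ⟨h1, h2⟩)
      · exact ⟨Or.inl h1, Or.inr (not_le.mp h2)⟩
      · exact ⟨Or.inr h1, Or.inl (not_le.mp h2)⟩
    · rintro ⟨h1 | h1, h2 | h2⟩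
      · exact absurd h1 (not_le.mpr h2)
      · exact Or.inl ⟨h1, not_le.mpr h2⟩
      · exact Or.inr ⟨h1, not_le.mpr h2⟩
      · exact absurd h1 (not_le.mpr h2)
  have hvol : ∀ i : Fin p, ((volume : Measure ℝ).restrict (Set.Icc 0 1))
      (Set.Ico (min (x i) (y i)) (max (x i) (y i))) = ENNReal.ofReal |x i - y i| := by
    intro i
    rw [Measure.restrict_apply measurableSet_Ico, Set.inter_eq_left.mpr, Real.volume_Ico,
      max_sub_min_eq_abs']
    rintro v ⟨h1, h2⟩
    exact ⟨(le_min (hx i).1 (hy i).1).trans h1, h2.le.trans (max_le (hx i).2 (hy i).2)⟩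
  have hmx : Measurable fun iv : Fin p × ℝ => x iv.1 :=
    (measurable_of_finite x).comp measurable_fst
  have hmy : Measurable fun iv : Fin p × ℝ => y iv.1 :=
    (measurable_of_finite y).comp measurable_fst
  have hA := measurableSet_le hmx measurable_snd
  have hB := measurableSet_le hmy measurable_snd
  have hm : MeasurableSet {iv : Fin p × ℝ | Xor' (x iv.1 ≤ iv.2) (y iv.1 ≤ iv.2)} :=
    (hA.diff hB).union (hB.diff hA)
  have hp0 : (0 : ℝ) < p := by exact_mod_cast hp
  rw [Measure.prod_apply hm]
  simp only [hsec, hvol]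
  rw [lintegral_smul_measure, lintegral_count, tsum_fintype,
    ENNReal.ofReal_div_of_pos hp0, ENNReal.ofReal_sum_of_nonneg (fun i _ => abs_nonneg _),
    ENNReal.ofReal_natCast, smul_eq_mul, ENNReal.div_eq_inv_mul]
end

section
/- Let p ≥ 1 and let X and Y be independent random vectors, each uniformly distributed on the cube [0,1]^p. Then E[ 2·(‖X − Y‖₁/p)·(1 − ‖X − Y‖₁/p) ] = 4/9 − 1/(9p), and in particular this expectation is at least 1/3. -/
open MeasureTheory ProbabilityTheory

noncomputable abbrev muI : Measure ℝ := (volume : Measure ℝ).restrict (Set.Icc 0 1)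

instance muI_prob : IsProbabilityMeasure muI := ⟨by simp⟩

lemma int_muI (f : ℝ → ℝ) : ∫ x, f x ∂muI = ∫ x in (0:ℝ)..1, f x := by
  rw [intervalIntegral.integral_of_le zero_le_one, integral_Icc_eq_integral_Ioc]

lemma integrable_prod_cont (f : ℝ × ℝ → ℝ) (hf : Continuous f) : Integrable f (muI.prod muI) := by
  have : muI.prod muI = (volume : Measure (ℝ × ℝ)).restrict (Set.Icc 0 1 ×ˢ Set.Icc 0 1) := by
    rw [Measure.prod_restrict]; rfl
  rw [this]
  exact hf.continuousOn.integrableOn_compact (isCompact_Icc.prod isCompact_Icc)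

lemma inner_abs (x : ℝ) (hx : x ∈ Set.Icc (0:ℝ) 1) :
    ∫ y, |x - y| ∂muI = x ^ 2 - x + 1 / 2 := by
  rw [int_muI, ← intervalIntegral.integral_add_adjacent_intervals (b := x)
    (Continuous.intervalIntegrable (by fun_prop) _ _)
    (Continuous.intervalIntegrable (by fun_prop) _ _)]
  have h1 : ∫ y in (0:ℝ)..x, |x - y| = ∫ y in (0:ℝ)..x, (x - y) := by
    apply intervalIntegral.integral_congr
    intro y hy
    rw [Set.uIcc_of_le hx.1] at hy
    exact abs_of_nonneg (by linarith [hy.2])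
  have h2 : ∫ y in x..1, |x - y| = ∫ y in x..1, (y - x) := by
    apply intervalIntegral.integral_congr
    intro y hy
    rw [Set.uIcc_of_le hx.2] at hy
    simp only
    rw [abs_of_nonpos (by linarith [hy.1])]; ring
  rw [h1, h2, intervalIntegral.integral_sub (by simp) (by simp),
    intervalIntegral.integral_sub (by simp) (by simp)]
  simp
  ring

lemma m1 : ∫ z : ℝ × ℝ, |z.1 - z.2| ∂(muI.prod muI) = 1 / 3 := by
  rw [integral_prod _ (integrable_prod_cont _ (by fun_prop))]
  have : ∫ x, ∫ y, |x - y| ∂muI ∂muI = ∫ x, (x ^ 2 - x + 1 / 2) ∂muI :=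
    setIntegral_congr_fun measurableSet_Icc (fun x hx => inner_abs x hx)
  rw [this, int_muI, intervalIntegral.integral_add (Continuous.intervalIntegrable (by fun_prop) _ _) (by simp), intervalIntegral.integral_sub (by simp) (by simp)]
  simp [integral_pow]
  norm_num

lemma inner_sq (x : ℝ) :
    ∫ y, |x - y| * |x - y| ∂muI = x ^ 2 - x + 1 / 3 := by
  rw [int_muI]
  have : ∀ y : ℝ, |x - y| * |x - y| = (x ^ 2 - (2 * x) * y) + y ^ 2 := by
    intro y; rw [abs_mul_abs_self]; ring
  simp_rw [this]
  rw [intervalIntegral.integral_add (Continuous.intervalIntegrable (by fun_prop) _ _) (by simp),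
    intervalIntegral.integral_sub (by simp) (Continuous.intervalIntegrable (by fun_prop) _ _),
    intervalIntegral.integral_const_mul]
  simp [integral_pow]
  ring

lemma m2 : ∫ z : ℝ × ℝ, |z.1 - z.2| * |z.1 - z.2| ∂(muI.prod muI) = 1 / 6 := by
  rw [integral_prod _ (integrable_prod_cont _ (by fun_prop))]
  simp_rw [inner_sq]
  rw [int_muI, intervalIntegral.integral_add (Continuous.intervalIntegrable (by fun_prop) _ _) (by simp), intervalIntegral.integral_sub (by simp) (by simp)]
  simp [integral_pow]
  norm_num

/-- Distance in one coordinate. -/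
def dst (z : ℝ × ℝ) : ℝ := |z.1 - z.2|

lemma dst_cont : Continuous dst := by unfold dst; fun_prop

noncomputable abbrev piI (p : ℕ) : Measure (Fin p → ℝ × ℝ) := Measure.pi fun _ => muI.prod muI

lemma int1 (p : ℕ) (i : Fin p) : Integrable (fun z => dst (z i)) (piI p) :=
  integrable_comp_eval (μ := fun _ : Fin p => muI.prod muI) (integrable_prod_cont dst dst_cont)

lemma val1 (p : ℕ) (i : Fin p) : ∫ z, dst (z i) ∂(piI p) = 1 / 3 := by
  rw [integral_comp_eval (μ := fun _ : Fin p => muI.prod muI)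
    dst_cont.aestronglyMeasurable]
  exact m1

lemma indep2 (p : ℕ) {i j : Fin p} (h : i ≠ j) :
    IndepFun (fun z : Fin p → ℝ × ℝ => dst (z i)) (fun z => dst (z j)) (piI p) :=
  (iIndepFun_pi (μ := fun _ : Fin p => muI.prod muI) (X := fun _ => dst)
    (fun _ => dst_cont.measurable.aemeasurable)).indepFun h

lemma int2 (p : ℕ) (i j : Fin p) : Integrable (fun z => dst (z i) * dst (z j)) (piI p) := by
  by_cases h : i = j
  · subst h
    exact integrable_comp_eval (μ := fun _ : Fin p => muI.prod muI) (f := fun z => dst z * dst z)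
      (integrable_prod_cont _ (dst_cont.mul dst_cont))
  · exact (indep2 p h).integrable_mul (int1 p i) (int1 p j)

lemma val2 (p : ℕ) (i j : Fin p) :
    ∫ z, dst (z i) * dst (z j) ∂(piI p) = 1 / 9 + if i = j then 1 / 18 else 0 := by
  by_cases h : i = j
  · subst h
    rw [integral_comp_eval (μ := fun _ : Fin p => muI.prod muI) (f := fun z => dst z * dst z)
      (dst_cont.mul dst_cont).aestronglyMeasurable]
    refine m2.trans ?_
    norm_num
  · have := (indep2 p h).integral_mul_eq_mul_integral (int1 p i).1 (int1 p j).1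
    rw [val1, val1] at this
    refine Eq.trans this ?_
    rw [if_neg h]; norm_num

lemma main_pi (p : ℕ) (hp : 1 ≤ p) :
    ∫ z, 2 * ((∑ i, dst (z i)) / p) * (1 - (∑ i, dst (z i)) / p) ∂(piI p) =
      4 / 9 - 1 / (9 * p) := by
  have hp0 : (p : ℝ) ≠ 0 := by positivity
  have h : ∀ z : Fin p → ℝ × ℝ,
      2 * ((∑ i, dst (z i)) / p) * (1 - (∑ i, dst (z i)) / p) =
      (2 / p) * (∑ i, dst (z i)) - (2 / p ^ 2) * ∑ i, ∑ j, dst (z i) * dst (z j) := by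
    intro z
    rw [← Finset.sum_mul_sum]
    field_simp
  simp_rw [h]
  rw [integral_sub ((integrable_finsetSum _ fun i _ => int1 p i).const_mul _)
    ((integrable_finsetSum _ fun i _ => integrable_finsetSum _ fun j _ => int2 p i j).const_mul _),
    integral_const_mul, integral_const_mul, integral_finsetSum _ (fun i _ => int1 p i),
    integral_finsetSum _ (fun i _ => integrable_finsetSum _ fun j _ => int2 p i j)]
  simp_rw [integral_finsetSum _ (fun j _ => int2 p _ j), val1, val2, Finset.sum_add_distrib]
  simp
  field_simp
  ring

lemma map_eq {Ω : Type*} [MeasurableSpace Ω] (P : Measure Ω) [IsProbabilityMeasure P]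
    (p : ℕ) (X Y : Ω → Fin p → ℝ)
    (hXm : Measurable X) (hYm : Measurable Y)
    (hX : P.map X = Measure.pi fun _ => (volume : Measure ℝ).restrict (Set.Icc 0 1))
    (hY : P.map Y = Measure.pi fun _ => (volume : Measure ℝ).restrict (Set.Icc 0 1))
    (hindep : IndepFun X Y P) :
    P.map (fun ω i => (X ω i, Y ω i)) = piI p := by
  have h1 := (indepFun_iff_map_prod_eq_prod_map_map hXm.aemeasurable hYm.aemeasurable).1 hindep
  rw [hX, hY] at h1
  have h2 := (measurePreserving_arrowProdEquivProdArrow ℝ ℝ (Fin p)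
    (fun _ => muI) (fun _ => muI)).symm
  refine Eq.trans ?_ h2.map_eq
  rw [← h1, Measure.map_map h2.measurable (hXm.prodMk hYm)]
  rfl

/-- For independent random vectors `X, Y` uniform on the cube `[0,1]^p`, the expected
uncertainty of the atomic query `{X, Y}` under the uniform prior over axis-parallel
bipartitions of `[0,1]^p` satisfies
`E[2·(‖X − Y‖₁/p)·(1 − ‖X − Y‖₁/p)] = 4/9 − 1/(9p) ≥ 1/3`. -/
theorem stmt_18 {Ω : Type*} [MeasurableSpace Ω] (P : Measure Ω) [IsProbabilityMeasure P]
    (p : ℕ) (hp : 1 ≤ p) (X Y : Ω → Fin p → ℝ)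
    (hXm : Measurable X) (hYm : Measurable Y)
    (hX : P.map X = Measure.pi fun _ => (volume : Measure ℝ).restrict (Set.Icc 0 1))
    (hY : P.map Y = Measure.pi fun _ => (volume : Measure ℝ).restrict (Set.Icc 0 1))
    (hindep : IndepFun X Y P) :
    (∫ ω, 2 * ((∑ i, |X ω i - Y ω i|) / p) * (1 - (∑ i, |X ω i - Y ω i|) / p) ∂P =
        4 / 9 - 1 / (9 * p)) ∧
      (1 : ℝ) / 3 ≤
        ∫ ω, 2 * ((∑ i, |X ω i - Y ω i|) / p) * (1 - (∑ i, |X ω i - Y ω i|) / p) ∂P := by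

  have key : ∫ ω, 2 * ((∑ i, |X ω i - Y ω i|) / p) * (1 - (∑ i, |X ω i - Y ω i|) / p) ∂P =
        4 / 9 - 1 / (9 * p) := by
    rw [← main_pi p hp, ← map_eq P p X Y hXm hYm hX hY hindep, integral_map]
    · rfl
    · exact Measurable.aemeasurable (by fun_prop)
    · have := dst_cont
      exact Continuous.aestronglyMeasurable (by fun_prop)
  refine ⟨key, ?_⟩
  rw [key]
  have hp1 : (1 : ℝ) ≤ p := by exact_mod_cast hp
  have : 1 / (9 * (p : ℝ)) ≤ 1 / 9 := by
    apply one_div_le_one_div_of_le <;> linarith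
  linarith
end

section
/- Let B > 0, let p ∈ (0,1) with z* := ln(p/(1−p)) ∈ [−B, B], and let z ∈ [−B, B]. Define the expected logistic loss L(z) = p·ln(1 + e^{−z}) + (1−p)·ln(1 + e^{z}). Then L(z) − L(z*) ≥ 2·( e^{B}/(1 + e^{B})² )² · (z − z*)². -/
/-- The expected logistic loss `L(z) = p·ln(1+e^{−z}) + (1−p)·ln(1+e^{z})`, minimized on
`[−B, B]` at `z* = ln(p/(1−p))`, satisfies the quadratic-margin condition
`L(z) − L(z*) ≥ 2·(e^B/(1+e^B)²)²·(z − z*)²` for all `z ∈ [−B, B]`. -/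
theorem stmt_19 (B : ℝ) (hB : 0 < B) (p : ℝ) (hp : p ∈ Set.Ioo (0 : ℝ) 1)
    (zs : ℝ) (hzs : zs = Real.log (p / (1 - p))) (hzsB : zs ∈ Set.Icc (-B) B)
    (z : ℝ) (hz : z ∈ Set.Icc (-B) B) :
    2 * (Real.exp B / (1 + Real.exp B) ^ 2) ^ 2 * (z - zs) ^ 2 ≤
      (p * Real.log (1 + Real.exp (-z)) + (1 - p) * Real.log (1 + Real.exp z)) -
        (p * Real.log (1 + Real.exp (-zs)) + (1 - p) * Real.log (1 + Real.exp zs)) := by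
  obtain ⟨hp0, hp1⟩ := hp
  have hq : 0 < 1 - p := by linarith
  have hes : Real.exp zs = p / (1 - p) := by rw [hzs, Real.exp_log (div_pos hp0 hq)]
  have hps : p = Real.exp zs / (1 + Real.exp zs) := by
    rw [hes]; field_simp; ring
  have key : ∀ x : ℝ, Real.log (1 + Real.exp (-x)) = Real.log (1 + Real.exp x) - x := by
    intro x
    have h : 1 + Real.exp (-x) = (1 + Real.exp x) / Real.exp x := by
      rw [Real.exp_neg]; field_simp; ring
    rw [h, Real.log_div (by positivity) (by positivity), Real.log_exp]
  rw [key, key]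
  set m : ℝ := Real.exp B / (1 + Real.exp B) ^ 2 with hm
  have hm0 : 0 < m := by positivity
  have hm4 : m ≤ 1 / 4 := by
    rw [hm, div_le_iff₀ (by positivity)]
    nlinarith [sq_nonneg (Real.exp B - 1)]
  have hmm : 4 * m ^ 2 ≤ m := by nlinarith
  have hpos : ∀ x : ℝ, 0 < 1 + Real.exp x := fun x => by positivity
  -- the shifted sigmoid is monotone on the interval
  have hd1 : ∀ x : ℝ, HasDerivAt (fun x => Real.exp x / (1 + Real.exp x) - 4 * m ^ 2 * x)
      (Real.exp x / (1 + Real.exp x) ^ 2 - 4 * m ^ 2) x := by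
    intro x
    have h1 := ((Real.hasDerivAt_exp x).div ((Real.hasDerivAt_exp x).const_add 1)
      (hpos x).ne').sub ((hasDerivAt_id x).const_mul (4 * m ^ 2))
    refine HasDerivAt.congr_deriv h1 ?_
    ring
  have hmono : MonotoneOn (fun x => Real.exp x / (1 + Real.exp x) - 4 * m ^ 2 * x)
      (Set.Icc (-B) B) := by
    apply monotoneOn_of_deriv_nonneg (convex_Icc _ _)
    · exact fun x _ => (hd1 x).continuousAt.continuousWithinAt
    · exact fun x _ => (hd1 x).differentiableAt.differentiableWithinAt
    · intro x hx
      have hx' := interior_subset hx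
      rw [(hd1 x).deriv]
      have h1 : Real.exp x ≤ Real.exp B := Real.exp_le_exp.2 hx'.2
      have h2 : 1 ≤ Real.exp x * Real.exp B := by
        rw [← Real.exp_add]; exact Real.one_le_exp (by linarith [hx'.1])
      have h3 : m ≤ Real.exp x / (1 + Real.exp x) ^ 2 := by
        rw [hm, div_le_div_iff₀ (by positivity) (by positivity)]
        nlinarith [mul_nonneg (sub_nonneg.2 h1) (sub_nonneg.2 h2)]
      linarith
  have hd2 : ∀ x : ℝ, HasDerivAt
      (fun x => Real.log (1 + Real.exp x) - p * x - 2 * m ^ 2 * (x - zs) ^ 2)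
      (Real.exp x / (1 + Real.exp x) - p - 4 * m ^ 2 * (x - zs)) x := by
    intro x
    have h1 := ((((Real.hasDerivAt_exp x).const_add 1).log (hpos x).ne').sub
      ((hasDerivAt_id x).const_mul p)).sub
      ((((hasDerivAt_id x).sub_const zs).pow 2).const_mul (2 * m ^ 2))
    refine HasDerivAt.congr_deriv h1 ?_
    simp
    ring
  have main : Real.log (1 + Real.exp zs) - p * zs - 2 * m ^ 2 * (zs - zs) ^ 2 ≤
      Real.log (1 + Real.exp z) - p * z - 2 * m ^ 2 * (z - zs) ^ 2 := by
    rcases le_total zs z with h | h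
    · have hM : MonotoneOn
          (fun x => Real.log (1 + Real.exp x) - p * x - 2 * m ^ 2 * (x - zs) ^ 2)
          (Set.Icc zs z) := by
        apply monotoneOn_of_deriv_nonneg (convex_Icc _ _)
        · exact fun x _ => (hd2 x).continuousAt.continuousWithinAt
        · exact fun x _ => (hd2 x).differentiableAt.differentiableWithinAt
        · intro x hx
          have hx' := interior_subset hx
          rw [(hd2 x).deriv]
          have := hmono hzsB ⟨hzsB.1.trans hx'.1, hx'.2.trans hz.2⟩ hx'.1
          simp only [← hps] at this
          linarith
      exact hM ⟨le_rfl, h⟩ ⟨h, le_rfl⟩ h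
    · have hM : AntitoneOn
          (fun x => Real.log (1 + Real.exp x) - p * x - 2 * m ^ 2 * (x - zs) ^ 2)
          (Set.Icc z zs) := by
        apply antitoneOn_of_deriv_nonpos (convex_Icc _ _)
        · exact fun x _ => (hd2 x).continuousAt.continuousWithinAt
        · exact fun x _ => (hd2 x).differentiableAt.differentiableWithinAt
        · intro x hx
          have hx' := interior_subset hx
          rw [(hd2 x).deriv]
          have := hmono ⟨hz.1.trans hx'.1, hx'.2.trans hzsB.2⟩ hzsB hx'.2
          simp only [← hps] at this
          linarith
      exact hM ⟨le_rfl, h⟩ ⟨h, le_rfl⟩ h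
  rw [sub_self] at main
  linarith
end
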